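/- Near-optimality for the RC-CPPG with linear objective: let ε ∈ (0,1), α > 0, β > 0, k ≥ 1, and m ≥ n ≥ 16k/ε be reals. Then there exist an integer T′ ≥ 1 and stops F′(1), …, F′(T′) in the rectangle D = [0,n] × [0,m] covering D with radius k such that, for every integer T ≥ 1 and every sequence of stops F(1), …, F(T) in D covering D with radius k, one has α·L(F′) + β·T′ ≤ (1+ε)·(α·L(F) + β·T), where L(F) = ∑_{i=1}^{T−1} dist₁(F(i), F(i+1)) denotes path length. In other words, the constructed up-and-down path is a (1+ε)-approximation for minimizing αL + βT over all covering paths with stops in D. -/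

import Mathlib

/-!
The proof compares a lower bound by area with an explicit lattice covering that attains it up to
boundary terms.

*Lower bound.* In the coordinates `(x + y, x - y)` the `l1` balls of radius `k` become axis-parallel
squares of side `2k`, and `dist1` becomes the sup distance. A stop at distance `t` from its
predecessor therefore covers new area at most `2kt - t²/2` if `t ≤ 2k`, and at most `2k²` in any
case (`newArea_le`). For any `0 ≤ d ≤ 2k` this is at most the tangent line `(2k - d) t + d²/2` of
that concave function at `d`, so a covering path satisfies
`n m ≤ 2k² + (2k - d) L + (d²/2) (T - 1)` (`area_lower_bound`).

*Choice of `d`.* The step `d` minimising the cost per unit of area, `(α d + β) / (d (2k - d/2))`,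
is the root of `α d²/2 = β (2k - d)` (`exists_step`). For it the tangent line is proportional to
`α t + β`, so every covering path costs at least `c (n m - 2k²)`, where `c = α / (2k - d)` is the
minimal cost per unit of area.

*Construction.* The up-and-down path runs through vertical columns at horizontal spacing
`w = 2k - d/2`, with stops at vertical spacing `d`, every other column being shifted by `d/2`, and
all stops clamped to the rectangle. For a point between two consecutive columns, the distances to a
suitable stop in each of the two columns add up to `w + d/2 = 2k`, so one of them is at most `k`
(`exists_stop`); clamping to the rectangle only brings stops closer to its points. The cost is
`c n m` up to terms of order `c k (n + m)`, which `n ≥ 16k/ε` absorbs (`cost_compare`).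
-/

open Finset

/-- l1 distance on ℝ². -/
noncomputable def dist1 (p q : ℝ × ℝ) : ℝ := |p.1 - q.1| + |p.2 - q.2|

/-- Path length of the stops `F 1, …, F T`. -/
noncomputable def pathLength (T : ℕ) (F : ℕ → ℝ × ℝ) : ℝ :=
  ∑ i ∈ Finset.Ico 1 T, dist1 (F i) (F (i + 1))

open MeasureTheory

/-! ### Lower bound by area -/

/-- The square of half-side `k` centred at `c`, which is the `l1` ball of radius `k` in the
coordinates `(x + y, x - y)`. -/
def diamond (k : ℝ) (c : ℝ × ℝ) : Set (ℝ × ℝ) :=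
  Set.Icc (c.1 - k) (c.1 + k) ×ˢ Set.Icc (c.2 - k) (c.2 + k)

/-- The linear change of coordinates `(x, y) ↦ (x + y, x - y)`. -/
noncomputable def rot : (ℝ × ℝ) →ₗ[ℝ] (ℝ × ℝ) :=
  Matrix.toLin (Module.Basis.finTwoProd ℝ) (Module.Basis.finTwoProd ℝ) !![1, 1; 1, -1]

lemma rot_apply (p : ℝ × ℝ) : rot p = (p.1 + p.2, p.1 - p.2) := by
  obtain ⟨x, y⟩ := p
  simp [rot, Matrix.toLin_finTwoProd_apply, sub_eq_add_neg]

lemma det_rot : LinearMap.det rot = -2 := by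
  rw [rot, LinearMap.det_toLin, Matrix.det_fin_two_of]
  norm_num

lemma rot_mem_diamond {k : ℝ} {p q : ℝ × ℝ} (h : dist1 p q ≤ k) : rot p ∈ diamond k (rot q) := by
  unfold dist1 at h
  rw [rot_apply, rot_apply]
  simp only [diamond, Set.mem_prod, Set.mem_Icc]
  have h1 := le_abs_self (p.1 - q.1)
  have h2 := neg_abs_le (p.1 - q.1)
  have h3 := le_abs_self (p.2 - q.2)
  have h4 := neg_abs_le (p.2 - q.2)
  refine ⟨⟨?_, ?_⟩, ?_, ?_⟩ <;> linarith

lemma abs_rot_fst_le (p q : ℝ × ℝ) : |(rot p).1 - (rot q).1| ≤ dist1 p q := by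
  rw [rot_apply, rot_apply, dist1]
  calc _ = |(p.1 - q.1) + (p.2 - q.2)| := by congr 1; ring
    _ ≤ _ := abs_add_le _ _

lemma abs_rot_snd_le (p q : ℝ × ℝ) : |(rot p).2 - (rot q).2| ≤ dist1 p q := by
  rw [rot_apply, rot_apply, dist1]
  calc _ = |(p.1 - q.1) - (p.2 - q.2)| := by congr 1; ring
    _ ≤ _ := abs_sub _ _

lemma volume_diamond {k : ℝ} (hk : 0 ≤ k) (c : ℝ × ℝ) : volume.real (diamond k c) = 4 * k ^ 2 := by
  rw [diamond, Measure.volume_eq_prod, measureReal_prod_prod, Real.volume_real_Icc_of_le (by linarith),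
    Real.volume_real_Icc_of_le (by linarith)]
  ring

lemma diamond_finite (k : ℝ) (c : ℝ × ℝ) : volume (diamond k c) ≠ ⊤ :=
  ((isCompact_Icc.prod isCompact_Icc).measure_lt_top).ne

/-- The overlap of two squares of side `2k` whose centres are at sup distance at most `t ≤ 2k`
has area at least `(2k - t)²`: it contains a square of that side. -/
lemma overlap_ge {k t : ℝ} (ht : t ≤ 2 * k) {c e : ℝ × ℝ}
    (h1 : |e.1 - c.1| ≤ t) (h2 : |e.2 - c.2| ≤ t) :
    (2 * k - t) ^ 2 ≤ volume.real (diamond k e ∩ diamond k c) := by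
  have key : ∀ a b : ℝ, |a - b| ≤ t →
      2 * k - t ≤ volume.real (Set.Icc (a - k) (a + k) ∩ Set.Icc (b - k) (b + k)) := by
    intro a b hab
    rw [Set.Icc_inter_Icc, Real.volume_real_Icc]
    refine le_max_of_le_left ?_
    obtain ⟨ha, hb⟩ := abs_le.mp hab
    rcases le_total a b with h | h
    · rw [inf_eq_left.mpr (by linarith), sup_eq_right.mpr (by linarith)]; linarith
    · rw [inf_eq_right.mpr (by linarith), sup_eq_left.mpr (by linarith)]; linarith
  rw [diamond, diamond, Set.prod_inter_prod, Measure.volume_eq_prod, measureReal_prod_prod, pow_two]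
  have a1 := key _ _ h1
  have a2 := key _ _ h2
  exact mul_le_mul a1 a2 (by linarith) (by linarith)

/-- The area newly covered by a stop at distance at most `t` from its predecessor lies below the
tangent line at `d` (all areas are doubled by the change of coordinates). -/
lemma newArea_le {k d t : ℝ} (hk : 0 ≤ k) (hd : d ≤ 2 * k) {c e : ℝ × ℝ}
    (h1 : |e.1 - c.1| ≤ t) (h2 : |e.2 - c.2| ≤ t) :
    volume.real (diamond k e \ diamond k c) ≤ 2 * ((2 * k - d) * t + d ^ 2 / 2) := by
  have hsum := measureReal_inter_add_sdiff (μ := volume) (s := diamond k e) (t := diamond k c)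
    (measurableSet_Icc.prod measurableSet_Icc) (h := diamond_finite k e)
  rw [volume_diamond hk] at hsum
  rcases le_total t (2 * k) with h | h
  · have := overlap_ge h h1 h2
    nlinarith [sq_nonneg (t - d)]
  · have h0 : 0 ≤ volume.real (diamond k e ∩ diamond k c) := measureReal_nonneg
    nlinarith [sq_nonneg (2 * k - d), mul_nonneg (sub_nonneg.2 hd) (sub_nonneg.2 h)]

lemma area_union_le {k d : ℝ} (hk : 0 ≤ k) (hd : d ≤ 2 * k) (F : ℕ → ℝ × ℝ) (T : ℕ) :
    volume.real (⋃ i ∈ Finset.Icc 1 (T + 1), diamond k (rot (F i))) ≤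
      4 * k ^ 2 + 2 * ((2 * k - d) * pathLength (T + 1) F + d ^ 2 / 2 * T) := by
  induction T with
  | zero => simp [pathLength, volume_diamond hk]
  | succ T ih =>
    have hlen : pathLength (T + 1 + 1) F
        = pathLength (T + 1) F + dist1 (F (T + 1)) (F (T + 1 + 1)) := by
      rw [pathLength, Finset.sum_Ico_succ_top (by omega), pathLength]
    have hsub : (⋃ i ∈ Finset.Icc 1 (T + 1 + 1), diamond k (rot (F i))) ⊆
        (⋃ i ∈ Finset.Icc 1 (T + 1), diamond k (rot (F i))) ∪
          (diamond k (rot (F (T + 1 + 1))) \ diamond k (rot (F (T + 1)))) := by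
      intro x hx
      simp only [Set.mem_iUnion, exists_prop, Finset.mem_Icc] at hx
      obtain ⟨i, hi, hxi⟩ := hx
      by_cases hx' : x ∈ ⋃ i ∈ Finset.Icc 1 (T + 1), diamond k (rot (F i))
      · exact Or.inl hx'
      · simp only [Set.mem_iUnion, exists_prop, Finset.mem_Icc, not_exists, not_and] at hx'
        right
        have hiT : i = T + 1 + 1 := by
          by_contra hne
          exact hx' i ⟨hi.1, by omega⟩ hxi
        subst hiT
        exact ⟨hxi, hx' (T + 1) ⟨by omega, le_rfl⟩⟩
    have hfin1 : volume (⋃ i ∈ Finset.Icc 1 (T + 1), diamond k (rot (F i))) ≠ ⊤ :=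
      (measure_biUnion_lt_top (Finset.finite_toSet _)
        (fun i _ => (diamond_finite k _).lt_top)).ne
    have hfin2 : volume (diamond k (rot (F (T + 1 + 1))) \ diamond k (rot (F (T + 1)))) ≠ ⊤ :=
      measure_ne_top_of_subset Set.sdiff_subset (diamond_finite k _)
    have h1 := measureReal_mono (μ := volume) hsub (measure_union_ne_top hfin1 hfin2)
    have h2 := measureReal_union_le (μ := volume)
      (⋃ i ∈ Finset.Icc 1 (T + 1), diamond k (rot (F i)))
      (diamond k (rot (F (T + 1 + 1))) \ diamond k (rot (F (T + 1))))
    have h3 : volume.real (diamond k (rot (F (T + 1 + 1))) \ diamond k (rot (F (T + 1)))) ≤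
        2 * ((2 * k - d) * dist1 (F (T + 1)) (F (T + 1 + 1)) + d ^ 2 / 2) := by
      apply newArea_le hk hd
      · rw [abs_sub_comm]; exact abs_rot_fst_le _ _
      · rw [abs_sub_comm]; exact abs_rot_snd_le _ _
    rw [hlen]
    push_cast
    linarith

/-- Linear trade-off between length and number of stops forced by the area to be covered. -/
lemma area_lower_bound {k d m n : ℝ} (hk : 0 ≤ k) (hd : d ≤ 2 * k) (hn : 0 ≤ n) (hm : 0 ≤ m)
    (F : ℕ → ℝ × ℝ) (T : ℕ) (hT : 1 ≤ T)
    (hcov : ∀ p : ℝ × ℝ, 0 ≤ p.1 → p.1 ≤ n → 0 ≤ p.2 → p.2 ≤ m →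
      ∃ i ∈ Finset.Icc 1 T, dist1 p (F i) ≤ k) :
    n * m ≤ 2 * k ^ 2 + (2 * k - d) * pathLength T F + d ^ 2 / 2 * (T - 1) := by
  obtain ⟨T, rfl⟩ : ∃ S, T = S + 1 := ⟨T - 1, by omega⟩
  have hsub : rot '' (Set.Icc 0 n ×ˢ Set.Icc 0 m) ⊆
      ⋃ i ∈ Finset.Icc 1 (T + 1), diamond k (rot (F i)) := by
    rintro _ ⟨p, ⟨⟨h1, h2⟩, h3, h4⟩, rfl⟩
    obtain ⟨i, hi, hp⟩ := hcov p h1 h2 h3 h4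
    simp only [Set.mem_iUnion]
    exact ⟨i, hi, rot_mem_diamond hp⟩
  have hfin : volume (⋃ i ∈ Finset.Icc 1 (T + 1), diamond k (rot (F i))) ≠ ⊤ :=
    (measure_biUnion_lt_top (Finset.finite_toSet _) (fun i _ => (diamond_finite k _).lt_top)).ne
  have hvol : volume.real (rot '' (Set.Icc 0 n ×ˢ Set.Icc 0 m)) = 2 * (n * m) := by
    rw [measureReal_def, Measure.addHaar_image_linearMap, det_rot, ENNReal.toReal_mul,
      ← measureReal_def, Measure.volume_eq_prod, measureReal_prod_prod,
      Real.volume_real_Icc_of_le hn, Real.volume_real_Icc_of_le hm]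
    norm_num
  have h1 := measureReal_mono (μ := volume) hsub hfin
  have h2 := area_union_le hk hd F T
  rw [hvol] at h1
  push_cast
  linarith

/-- The step length minimising the cost per unit of covered area. -/
lemma exists_step {α β k : ℝ} (hα : 0 < α) (hβ : 0 < β) (hk : 0 < k) :
    ∃ d, 0 < d ∧ d < 2 * k ∧ α * d ^ 2 / 2 = β * (2 * k - d) := by
  have hcont : ContinuousOn (fun d : ℝ => α * d ^ 2 / 2 - β * (2 * k - d)) (Set.Icc 0 (2 * k)) := by
    fun_prop
  have hmem : (0 : ℝ) ∈ Set.Ioo ((fun d : ℝ => α * d ^ 2 / 2 - β * (2 * k - d)) 0)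
      ((fun d : ℝ => α * d ^ 2 / 2 - β * (2 * k - d)) (2 * k)) := by
    constructor
    · have := mul_pos hβ hk
      simp only
      nlinarith
    · have := mul_pos hα (pow_pos hk 2)
      simp only
      nlinarith
  obtain ⟨d, ⟨h1, h2⟩, h3⟩ := intermediate_value_Ioo (by linarith) hcont hmem
  exact ⟨d, h1, h2, by simp only at h3; linarith⟩

/-! ### The up-and-down path -/

/-- Level of the stop number `i` (counted from `0`) within its column, each column having levels
`0, …, N`; even columns are traversed upwards and odd ones downwards. -/
def level (N i : ℕ) : ℕ :=
  if i / (N + 1) % 2 = 0 then i % (N + 1) else N - i % (N + 1)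

/-- Height of level `s` in column `j`: even columns have heights `s d`, odd ones are shifted down
by `d / 2`, and heights are clamped to `[0, m]`. -/
noncomputable def height (d m : ℝ) (j s : ℕ) : ℝ :=
  max 0 (min m (d * s - if j % 2 = 0 then 0 else d / 2))

/-- The up-and-down path, indexed from `0`; column `j` has abscissa `j w` clamped to `n`. -/
noncomputable def zig (d w m n : ℝ) (N i : ℕ) : ℝ × ℝ :=
  (min n (w * (i / (N + 1) : ℕ)), height d m (i / (N + 1)) (level N i))

/-- An upper bound for the length of the path up to stop `i`: horizontal progress, plus `m` for each
completed column, plus the vertical progress within the current column. -/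
noncomputable def potential (d w m n : ℝ) (N i : ℕ) : ℝ :=
  (zig d w m n N i).1 + m * (i / (N + 1) : ℕ) +
    if i / (N + 1) % 2 = 0 then (zig d w m n N i).2 else m - (zig d w m n N i).2

lemma height_nonneg (d m : ℝ) (j s : ℕ) : 0 ≤ height d m j s := le_max_left _ _

lemma height_le {m : ℝ} (hm : 0 ≤ m) (d : ℝ) (j s : ℕ) : height d m j s ≤ m :=
  max_le hm (min_le_left _ _)

lemma height_mono {d : ℝ} (hd : 0 ≤ d) (m : ℝ) (j : ℕ) {s t : ℕ} (h : s ≤ t) :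
    height d m j s ≤ height d m j t := by
  unfold height
  have : (s : ℝ) ≤ t := by exact_mod_cast h
  gcongr

lemma height_zero {d : ℝ} (hd : 0 ≤ d) (m : ℝ) (j : ℕ) : height d m j 0 = 0 := by
  unfold height
  apply max_eq_left
  apply min_le_of_right_le
  split_ifs <;> (simp; try linarith)

lemma height_top {d m : ℝ} (hm : 0 ≤ m) {j N : ℕ} (hj : j % 2 = 0) (hN : m ≤ d * N) :
    height d m j N = m := by
  unfold height
  rw [if_pos hj, sub_zero, min_eq_left hN, max_eq_right hm]

/-- Every position either is followed by one in the same column or ends its column. -/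
lemma step_cases (N i : ℕ) :
    ((i + 1) / (N + 1) = i / (N + 1) ∧ (i + 1) % (N + 1) = i % (N + 1) + 1) ∨
    ((i + 1) / (N + 1) = i / (N + 1) + 1 ∧ (i + 1) % (N + 1) = 0 ∧ i % (N + 1) = N) := by
  have h := Nat.div_add_mod i (N + 1)
  have hlt := Nat.mod_lt i (Nat.succ_pos N)
  set q := i / (N + 1)
  set r := i % (N + 1)
  rcases Nat.lt_or_ge r N with hr | hr
  · left
    have e : i + 1 = (r + 1) + (N + 1) * q := by omega
    rw [e, Nat.add_mul_div_left _ _ (Nat.succ_pos N), Nat.add_mul_mod_self_left,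
      Nat.div_eq_of_lt (by omega), Nat.mod_eq_of_lt (by omega)]
    omega
  · right
    have hrN : r = N := by omega
    have e : i + 1 = (N + 1) * (q + 1) := by rw [mul_add]; omega
    rw [e, Nat.mul_div_cancel_left _ (Nat.succ_pos N), Nat.mul_mod_right]
    exact ⟨rfl, rfl, hrN⟩

lemma dist_le_potential {d w m n : ℝ} (hd : 0 ≤ d) (hw : 0 ≤ w) (hm : 0 ≤ m) {N : ℕ}
    (hN : m ≤ d * N) (i : ℕ) :
    dist1 (zig d w m n N i) (zig d w m n N (i + 1)) ≤
      potential d w m n N (i + 1) - potential d w m n N i := by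
  have hlt := Nat.mod_lt i (Nat.succ_pos N)
  rcases step_cases N i with ⟨hq, hr⟩ | ⟨hq, hr, hrN⟩
  · have hlt' := Nat.mod_lt (i + 1) (Nat.succ_pos N)
    simp only [dist1, potential, zig, level, hq, hr]
    by_cases hj : i / (N + 1) % 2 = 0
    · simp only [hj, if_true, sub_self, abs_zero]
      have := height_mono hd m (i / (N + 1)) (Nat.le_succ (i % (N + 1)))
      rw [abs_sub_comm, abs_of_nonneg (by linarith)]
      linarith
    · simp only [hj, if_false, sub_self, abs_zero]
      have := height_mono hd m (i / (N + 1))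
        (show N - (i % (N + 1) + 1) ≤ N - i % (N + 1) by omega)
      rw [abs_of_nonneg (by linarith)]
      linarith
  · have hx : min n (w * ((i / (N + 1) : ℕ) : ℝ)) ≤ min n (w * ((i / (N + 1) + 1 : ℕ) : ℝ)) := by
      gcongr
      omega
    simp only [dist1, potential, zig, level, hq, hr, hrN]
    rw [abs_sub_comm, abs_of_nonneg (sub_nonneg.2 hx)]
    by_cases hj : i / (N + 1) % 2 = 0
    · have hj' : ¬ (i / (N + 1) + 1) % 2 = 0 := by omega
      simp only [hj, hj', if_true, if_false, Nat.sub_zero]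
      rw [height_top hm hj hN, abs_of_nonneg (sub_nonneg.2 (height_le hm _ _ _))]
      push_cast
      linarith
    · have hj' : (i / (N + 1) + 1) % 2 = 0 := by omega
      simp only [hj, hj', if_true, if_false, Nat.sub_self]
      rw [height_zero hd, height_zero hd]
      push_cast
      simp only [sub_self, abs_zero]
      linarith

lemma potential_nonneg {d w m n : ℝ} (hw : 0 ≤ w) (hm : 0 ≤ m) (hn : 0 ≤ n) (N i : ℕ) :
    0 ≤ potential d w m n N i := by
  unfold potential zig
  have h1 := height_nonneg d m (i / (N + 1)) (level N i)
  have h2 := height_le hm d (i / (N + 1)) (level N i)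
  have h3 : 0 ≤ min n (w * (i / (N + 1) : ℕ)) := le_min hn (by positivity)
  have h4 : 0 ≤ m * (i / (N + 1) : ℕ) := by positivity
  simp only
  split_ifs <;> linarith

lemma potential_le {d w m n : ℝ} (hm : 0 ≤ m) {N C i : ℕ} (hi : i < C * (N + 1)) :
    potential d w m n N i ≤ n + m * C := by
  unfold potential zig
  have h1 := height_nonneg d m (i / (N + 1)) (level N i)
  have h2 := height_le hm d (i / (N + 1)) (level N i)
  have h3 : min n (w * (i / (N + 1) : ℕ)) ≤ n := min_le_left _ _
  have hC : i / (N + 1) + 1 ≤ C := (Nat.div_lt_iff_lt_mul (Nat.succ_pos N)).2 hi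
  have hC' : ((i / (N + 1) : ℕ) : ℝ) + 1 ≤ C := by exact_mod_cast hC
  have h4 := mul_le_mul_of_nonneg_left hC' hm
  simp only
  split_ifs <;> linarith

lemma pathLength_zig_le {d w m n : ℝ} (hd : 0 ≤ d) (hw : 0 ≤ w) (hm : 0 ≤ m) (hn : 0 ≤ n)
    {N C : ℕ} (hN : m ≤ d * N) (hC : 1 ≤ C) :
    pathLength (C * (N + 1)) (fun i => zig d w m n N (i - 1)) ≤ n + m * C := by
  have key : ∀ T, pathLength (T + 1) (fun i => zig d w m n N (i - 1)) ≤
      potential d w m n N T - potential d w m n N 0 := by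
    intro T
    induction T with
    | zero => simp [pathLength]
    | succ T ih =>
      have := dist_le_potential (n := n) hd hw hm hN T
      rw [pathLength] at ih ⊢
      rw [Finset.sum_Ico_succ_top (by omega)]
      simp only [Nat.add_sub_cancel] at ih ⊢
      linarith
  have hpos : 0 < C * (N + 1) := by positivity
  have h1 := key (C * (N + 1) - 1)
  rw [Nat.sub_add_cancel hpos] at h1
  have h2 := potential_le (d := d) (w := w) (n := n) hm
    (show C * (N + 1) - 1 < C * (N + 1) by omega)
  have h3 := potential_nonneg (d := d) hw hm hn N 0
  linarith

/-- Every level of every column is visited. -/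
lemma exists_index (d w m n : ℝ) {N C j s : ℕ} (hj : j < C) (hs : s ≤ N) :
    ∃ i ∈ Finset.Icc 1 (C * (N + 1)),
      zig d w m n N (i - 1) = (min n (w * j), height d m j s) := by
  have hmul : (j + 1) * (N + 1) ≤ C * (N + 1) := Nat.mul_le_mul_right _ hj
  have hmul' : (j + 1) * (N + 1) = (N + 1) * j + (N + 1) := by ring
  have aux : ∀ r, r ≤ N → (r + (N + 1) * j) / (N + 1) = j ∧ (r + (N + 1) * j) % (N + 1) = r := by
    intro r hr
    rw [Nat.add_mul_div_left _ _ (Nat.succ_pos N), Nat.add_mul_mod_self_left,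
      Nat.div_eq_of_lt (by omega), Nat.mod_eq_of_lt (by omega)]
    omega
  by_cases hp : j % 2 = 0
  · obtain ⟨h1, h2⟩ := aux s hs
    refine ⟨s + (N + 1) * j + 1, Finset.mem_Icc.2 ⟨by omega, by omega⟩, ?_⟩
    simp only [Nat.add_sub_cancel, zig, level, h1, h2, hp, if_true]
  · obtain ⟨h1, h2⟩ := aux (N - s) (by omega)
    refine ⟨N - s + (N + 1) * j + 1, Finset.mem_Icc.2 ⟨by omega, by omega⟩, ?_⟩
    simp only [Nat.add_sub_cancel, zig, level, h1, h2, hp, if_false, Nat.sub_sub_self hs]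

/-- Clamping a stop to the rectangle does not increase its distance to points of the rectangle. -/
lemma dist1_clamp_le {w d m n x y : ℝ} (hx : x ≤ n) (hy : 0 ≤ y) (hy' : y ≤ m) (j s : ℕ) :
    dist1 (x, y) (min n (w * j), height d m j s) ≤
      |x - w * j| + |y - (d * s - if j % 2 = 0 then 0 else d / 2)| := by
  simp only [dist1, height]
  set X := w * (j : ℝ)
  set Y := d * (s : ℝ) - if j % 2 = 0 then 0 else d / 2
  have h1 : |x - min n X| ≤ |x - X| := by
    calc |x - min n X| = |min n x - min n X| := by rw [min_eq_right hx]
      _ ≤ |x - X| := by simpa using abs_min_sub_min_le_max n x n X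
  have h2 : |y - max 0 (min m Y)| ≤ |y - Y| := by
    calc |y - max 0 (min m Y)| = |max 0 (min m y) - max 0 (min m Y)| := by
          rw [min_eq_right hy', max_eq_right hy]
      _ ≤ |min m y - min m Y| := by simpa using abs_max_sub_max_le_max 0 (min m y) 0 (min m Y)
      _ ≤ |y - Y| := by simpa using abs_min_sub_min_le_max m y m Y
  linarith

/-- A height `y` has a level `s` in even columns and a level `t` in odd ones whose vertical
distances to `y` add up to `d / 2`. -/
lemma exists_levels {d m y : ℝ} (hd : 0 < d) (hy : 0 ≤ y) (hy' : y ≤ m) :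
    ∃ s t : ℕ, s ≤ ⌊m / d⌋₊ + 1 ∧ t ≤ ⌊m / d⌋₊ + 1 ∧
      |y - d * s| + |y - (d * t - d / 2)| ≤ d / 2 := by
  set r := ⌊y / d⌋₊
  have hr1 : d * r ≤ y := by
    have := Nat.floor_le (div_nonneg hy hd.le)
    rw [le_div_iff₀ hd] at this
    linarith
  have hr2 : y < d * (r + 1) := by
    have := Nat.lt_floor_add_one (y / d)
    rw [div_lt_iff₀ hd] at this
    linarith
  have hrN : r ≤ ⌊m / d⌋₊ := Nat.floor_mono (by gcongr)
  rcases le_total (y - d * r) (d / 2) with h | h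
  · refine ⟨r, r + 1, by omega, by omega, ?_⟩
    push_cast
    rw [abs_of_nonneg (by linarith), abs_of_nonpos (by linarith)]
    linarith
  · refine ⟨r + 1, r + 1, by omega, by omega, ?_⟩
    push_cast
    rw [abs_of_nonpos (by linarith), abs_of_nonneg (by linarith)]
    linarith

lemma exists_stop {d k w m n : ℝ} (hd : 0 < d) (hw : w = 2 * k - d / 2) (hw0 : 0 < w)
    {p : ℝ × ℝ} (h1 : 0 ≤ p.1) (h2 : p.1 ≤ n) (h3 : 0 ≤ p.2) (h4 : p.2 ≤ m) :
    ∃ i ∈ Finset.Icc 1 ((⌊n / w⌋₊ + 2) * (⌊m / d⌋₊ + 1 + 1)),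
      dist1 p (zig d w m n (⌊m / d⌋₊ + 1) (i - 1)) ≤ k := by
  obtain ⟨x, y⟩ := p
  simp only at h1 h2 h3 h4
  obtain ⟨s, t, hs, ht, hst⟩ := exists_levels hd h3 h4
  set j := ⌊x / w⌋₊
  have hj1 : w * j ≤ x := by
    have := Nat.floor_le (div_nonneg h1 hw0.le)
    rw [le_div_iff₀ hw0] at this
    linarith
  have hj2 : x < w * (j + 1) := by
    have := Nat.lt_floor_add_one (x / w)
    rw [div_lt_iff₀ hw0] at this
    linarith
  have hjC : j ≤ ⌊n / w⌋₊ := Nat.floor_mono (by gcongr)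
  -- Levels `a`, `b` in columns `j`, `j + 1`; the four distances add up to at most `w + d / 2 = 2k`.
  have main : ∀ a b : ℕ, a ≤ ⌊m / d⌋₊ + 1 → b ≤ ⌊m / d⌋₊ + 1 →
      |y - (d * a - if j % 2 = 0 then 0 else d / 2)| +
        |y - (d * b - if (j + 1) % 2 = 0 then 0 else d / 2)| ≤ d / 2 →
      ∃ i ∈ Finset.Icc 1 ((⌊n / w⌋₊ + 2) * (⌊m / d⌋₊ + 1 + 1)),
        dist1 (x, y) (zig d w m n (⌊m / d⌋₊ + 1) (i - 1)) ≤ k := by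
    intro a b ha hb hab
    have da := dist1_clamp_le (w := w) (d := d) h2 h3 h4 j a
    have db := dist1_clamp_le (w := w) (d := d) h2 h3 h4 (j + 1) b
    rw [abs_of_nonneg (by linarith)] at da
    push_cast at db
    rw [abs_of_nonpos (by linarith)] at db
    obtain ⟨ia, hia, ea⟩ := exists_index d w m n (show j < ⌊n / w⌋₊ + 2 by omega) ha
    obtain ⟨ib, hib, eb⟩ := exists_index d w m n (show j + 1 < ⌊n / w⌋₊ + 2 by omega) hb
    rcases le_or_gt (dist1 (x, y) (zig d w m n (⌊m / d⌋₊ + 1) (ia - 1))) k with h | h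
    · exact ⟨ia, hia, h⟩
    · refine ⟨ib, hib, ?_⟩
      rw [ea] at h
      rw [eb]
      push_cast
      linarith
  by_cases hp : j % 2 = 0
  · have hp' : ¬ (j + 1) % 2 = 0 := by omega
    refine main s t hs ht ?_
    simp only [hp, hp', if_true, if_false, sub_zero]
    exact hst
  · have hp' : (j + 1) % 2 = 0 := by omega
    refine main t s ht hs ?_
    simp only [hp, hp', if_true, if_false, sub_zero]
    linarith

/-! ### Comparison of costs -/

/-- Cost of at most `n / w + 2` columns with at most `m / d + 2` stops each, against the lower bound
`c (n m - 2k²)`, where `c` is the minimal cost per unit of area. -/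
lemma cost_compare {ε α β k m n d w c C M L Q : ℝ} (hε0 : 0 < ε) (hε1 : ε < 1)
    (hα : 0 < α) (hβ : 0 < β) (hk : 0 < k) (hmn : n ≤ m) (hn : 16 * k ≤ ε * n)
    (hd : 0 < d) (hd2 : d < 2 * k) (hw : w = 2 * k - d / 2) (hc : 0 < c)
    (hcost : α * d + β = c * (d * w)) (hC : C ≤ n / w + 2) (hC0 : 0 ≤ C) (hM : M ≤ m / d + 2)
    (hL : L ≤ n + m * C) (hQ : c * (n * m - 2 * k ^ 2) ≤ Q) :
    α * L + β * (C * M) ≤ (1 + ε) * Q := by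
  have hw0 : 0 < w := by linarith
  have hn0 : 16 * k ≤ n := by nlinarith
  have hn1 : 0 ≤ n := by linarith
  have hm0 : 0 < m := by linarith
  have hαc : α ≤ c * w := by
    by_contra! h
    nlinarith [mul_lt_mul_of_pos_right h hd]
  have hβc : β ≤ c * (d * w) := by nlinarith [mul_pos hα hd]
  have hrate : α * m + β * (m / d) = c * (w * m) := by
    field_simp
    linear_combination hcost
  have hCw : C * w ≤ n + 2 * w := by
    have := mul_le_mul_of_nonneg_right hC hw0.le
    have e : (n / w + 2) * w = n + 2 * w := by field_simp
    linarith
  have s1 : α * L ≤ α * (n + m * C) := by gcongr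
  have s2 : β * (C * M) ≤ β * (C * (m / d + 2)) := by gcongr
  have s3 : α * (n + m * C) + β * (C * (m / d + 2)) = α * n + C * (c * (w * m)) + 2 * (β * C) := by
    linear_combination C * hrate
  have s4 : C * (c * (w * m)) ≤ c * (m * (n + 2 * w)) := by
    calc C * (c * (w * m)) = c * m * (C * w) := by ring
      _ ≤ c * m * (n + 2 * w) := by gcongr
      _ = _ := by ring
  have s5 : β * C ≤ c * (d * (n + 2 * w)) := by
    calc β * C ≤ c * (d * w) * C := by gcongr
      _ = c * d * (C * w) := by ring
      _ ≤ c * d * (n + 2 * w) := by gcongr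
      _ = _ := by ring
  have s6 : α * n ≤ c * (w * n) := by
    calc α * n ≤ c * w * n := by gcongr
      _ = _ := by ring
  have s7 : w * n + m * (n + 2 * w) + 2 * (d * (n + 2 * w)) ≤
      (1 + ε) * (n * m - 2 * k ^ 2) := by
    have hwk : w ≤ 2 * k := by linarith
    have a1 : w * n ≤ 2 * k * m := by gcongr
    have a2 : m * w ≤ m * (2 * k) := by gcongr
    have a3 : d * n ≤ 2 * k * m := by gcongr
    have a4 : d * w ≤ 2 * k * (2 * k) := by gcongr
    have a5 : 16 * k * m ≤ ε * n * m := by gcongr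
    have a6 : ε * k ^ 2 ≤ 1 * k ^ 2 := by gcongr
    have a7 : k * (16 * k) ≤ k * m := by gcongr; linarith
    nlinarith
  have s8 := mul_le_mul_of_nonneg_left s7 hc.le
  have s9 : (1 + ε) * (c * (n * m - 2 * k ^ 2)) ≤ (1 + ε) * Q := by gcongr
  linarith

theorem stmt_10 (ε α β k m n : ℝ) (hε0 : 0 < ε) (hε1 : ε < 1)
    (hα : 0 < α) (hβ : 0 < β) (hk : 1 ≤ k) (hmn : n ≤ m) (hn : 16 * k / ε ≤ n) :
    ∃ (T' : ℕ) (F' : ℕ → ℝ × ℝ), 1 ≤ T' ∧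
      (∀ i ∈ Finset.Icc 1 T', 0 ≤ (F' i).1 ∧ (F' i).1 ≤ n ∧ 0 ≤ (F' i).2 ∧ (F' i).2 ≤ m) ∧
      (∀ p : ℝ × ℝ, 0 ≤ p.1 → p.1 ≤ n → 0 ≤ p.2 → p.2 ≤ m →
        ∃ i ∈ Finset.Icc 1 T', dist1 p (F' i) ≤ k) ∧
      (∀ (T : ℕ) (F : ℕ → ℝ × ℝ), 1 ≤ T →
        (∀ i ∈ Finset.Icc 1 T, 0 ≤ (F i).1 ∧ (F i).1 ≤ n ∧ 0 ≤ (F i).2 ∧ (F i).2 ≤ m) →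
        (∀ p : ℝ × ℝ, 0 ≤ p.1 → p.1 ≤ n → 0 ≤ p.2 → p.2 ≤ m →
          ∃ i ∈ Finset.Icc 1 T, dist1 p (F i) ≤ k) →
        α * pathLength T' F' + β * (T' : ℝ) ≤ (1 + ε) * (α * pathLength T F + β * (T : ℝ))) := by
  have hk0 : 0 < k := by linarith
  have hεn : 16 * k ≤ ε * n := by
    rw [div_le_iff₀ hε0] at hn
    linarith
  have hn0 : 0 < n := lt_of_lt_of_le (by positivity) hn
  have hm0 : 0 < m := by linarith
  obtain ⟨d, hd, hd2, hopt⟩ := exists_step hα hβ hk0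
  obtain ⟨w, hw⟩ : ∃ w, w = 2 * k - d / 2 := ⟨_, rfl⟩
  have hw0 : 0 < w := by linarith
  have hK : 0 < 2 * k - d := by linarith
  have hN : m ≤ d * (⌊m / d⌋₊ + 1 : ℕ) := by
    have := Nat.lt_floor_add_one (m / d)
    rw [div_lt_iff₀ hd] at this
    push_cast
    linarith
  refine ⟨(⌊n / w⌋₊ + 2) * (⌊m / d⌋₊ + 1 + 1),
    fun i => zig d w m n (⌊m / d⌋₊ + 1) (i - 1), ?_, ?_, ?_, ?_⟩
  · exact Nat.succ_le_of_lt (by positivity)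
  · intro i _
    exact ⟨le_min hn0.le (by positivity), min_le_left _ _, height_nonneg _ _ _ _,
      height_le hm0.le _ _ _⟩
  · intro p h1 h2 h3 h4
    exact exists_stop hd hw hw0 h1 h2 h3 h4
  · intro T F hT _ hcov
    have hlow := area_lower_bound hk0.le hd2.le hn0.le hm0.le F T hT hcov
    have hlen := pathLength_zig_le (C := ⌊n / w⌋₊ + 2) hd.le hw0.le hm0.le hn0.le hN (by omega)
    have hC := Nat.floor_le (div_nonneg hn0.le hw0.le)
    have hM := Nat.floor_le (div_nonneg hm0.le hd.le)
    push_cast at hlen ⊢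
    refine cost_compare (c := α / (2 * k - d)) hε0 hε1 hα hβ hk0 hmn hεn hd hd2 hw
      (by positivity) ?_ (by linarith) (by positivity) (by linarith) hlen ?_
    · rw [hw]
      field_simp
      linear_combination -2 * hopt
    · -- By the choice of `d`, the tangent line `(2k - d) t + d² / 2` is `(2k - d) / α` times the
      -- cost `α t + β` of a step.
      rw [div_mul_eq_mul_div, div_le_iff₀ hK]
      have h := mul_le_mul_of_nonneg_left hlow hα.le
      have e : α * (d ^ 2 / 2 * ((T : ℝ) - 1)) = β * (2 * k - d) * (T - 1) := by
        linear_combination ((T : ℝ) - 1) * hopt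
      have hpos := mul_pos hβ hK
      linarith
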